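/- Let α≥0, 0<ε<1/100, and let g∈C_c(cl(ℝ³₊)) be continuous with compact support in the closed half-space. Then the function g^ε = E⁺(g) − 2α I_α(g), defined on cl(ℝ³₊), is C¹ up to the boundary and satisfies the Robin boundary condition (∂₃ g^ε − α g^ε)(x',0) = 0 for all x'∈ℝ², where ∂₃ denotes the one-sided derivative in x₃ from the half-space. -/

import Mathlib

/-!
Let `G = (1_{ℝ³₊} g) * η_ε` (`cutMol`), a compactly supported `C¹` function on all of ℝ³. Since
`η` is radial, `E⁺(g)(x) = G(x) + G(x*)` (`Ep_eq`) and
`I_α(g)(x) = ∫₀^∞ e^{-αξ} G(x', -(x₃ + ξ)) dξ` (`Ialpha_eq`). The latter is a one-dimensional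
convolution in `x₃` with parameter `x'`, hence `C¹` (`contDiff_Ialpha`), so `g^ε` is `C¹` on
the whole of ℝ³ and `∂₃` at the boundary is the ordinary partial derivative.

The function `E⁺(g)` is even in `x₃`, so `∂₃ E⁺(g) = 0` on `{x₃ = 0}` (`pd_Ep`); the substitution
`s = x₃ + ξ` and the fundamental theorem of calculus give `∂₃ I_α(g)(x) = α I_α(g)(x) - G(x*)`
(`pd_Ialpha`). On the boundary `x* = x` and `E⁺(g) = 2G`, whence
`∂₃ g^ε = 2α G - 2α² I_α(g) = α (E⁺(g) - 2α I_α(g)) = α g^ε`.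
-/


open MeasureTheory Set Filter

noncomputable section

/-- ℝ³ with the Euclidean structure. -/
abbrev V3 : Type := EuclideanSpace ℝ (Fin 3)

/-- The `j`-th coordinate vector of ℝ³. -/
def e3 (j : Fin 3) : V3 := EuclideanSpace.single j (1 : ℝ)

/-- The partial derivative `∂_j f` of a scalar function on ℝ³. -/
def pd (j : Fin 3) (f : V3 → ℝ) (x : V3) : ℝ := fderiv ℝ f x (e3 j)

/-- The point `(a,b,c)` of ℝ³. -/
def mk3 (a b c : ℝ) : V3 := (WithLp.equiv 2 (Fin 3 → ℝ)).symm ![a, b, c]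

/-- The reflected point `x* = (x', -x₃)`. -/
def refl3 (x : V3) : V3 := mk3 (x 0) (x 1) (-(x 2))

/-- Signs for the even-even-odd extension. -/
def sgn3 (i : Fin 3) : ℝ := if i = 2 then -1 else 1

/-- The open upper half space ℝ³₊. -/
def Hplus : Set V3 := {x : V3 | 0 < x 2}

/-- The half cylinder C₊(R) = B'(R) × (0,R). -/
def Cplus (R : ℝ) : Set V3 := {x : V3 | (x 0)^2 + (x 1)^2 < R^2 ∧ 0 < x 2 ∧ x 2 < R}

/-- The full cylinder C(R) = B'(R) × (-R,R). -/
def Ccyl (R : ℝ) : Set V3 := {x : V3 | (x 0)^2 + (x 1)^2 < R^2 ∧ -R < x 2 ∧ x 2 < R}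

/-- The flat boundary disk Γ(R) = B'(R) × {0}. -/
def Gam (R : ℝ) : Set V3 := {x : V3 | (x 0)^2 + (x 1)^2 < R^2 ∧ x 2 = 0}

/-- The time interval (-R², 0), so that Q₊(R) = C₊(R) × TI R. -/
def TI (R : ℝ) : Set ℝ := Ioo (-(R^2)) 0

/-- Divergence of a vector field on ℝ³. -/
def vdiv (v : V3 → V3) (x : V3) : ℝ := ∑ j, pd j (fun y => v y j) x

/-- Laplacian of a scalar function on ℝ³. -/
def lap (f : V3 → ℝ) (x : V3) : ℝ := ∑ j, pd j (fun y => pd j f y) x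

/-- Curl of a vector field on ℝ³. -/
def curl3 (v : V3 → V3) (x : V3) : V3 :=
  mk3 (pd 1 (fun y => v y 2) x - pd 2 (fun y => v y 1) x)
      (pd 2 (fun y => v y 0) x - pd 0 (fun y => v y 2) x)
      (pd 0 (fun y => v y 1) x - pd 1 (fun y => v y 0) x)

/-- Membership in the mixed Lebesgue space L^r(I; L^q(Ω)):
joint measurability, a.e.-in-time q-integrability in space, and
r/q-integrability in time of the spatial integrals. -/
def MemLqr {X E : Type*} [MeasureSpace X] [NormedAddCommGroup E]
    (q r : ℝ) (Ω : Set X) (I : Set ℝ) (u : ℝ → X → E) : Prop :=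
  AEStronglyMeasurable (fun p : ℝ × X => u p.1 p.2)
      ((volume.restrict I).prod (volume.restrict Ω)) ∧
  (∀ᵐ t ∂(volume.restrict I), IntegrableOn (fun x => ‖u t x‖ ^ q) Ω) ∧
  IntegrableOn (fun t => (∫ x in Ω, ‖u t x‖ ^ q) ^ (r / q)) I

/-- The mixed Lebesgue norm ‖u‖_{L^{q,r}(Ω × I)} = ‖ t ↦ ‖u(·,t)‖_{L^q(Ω)} ‖_{L^r(I)}. -/
def LqrNorm {X E : Type*} [MeasureSpace X] [NormedAddCommGroup E]
    (q r : ℝ) (Ω : Set X) (I : Set ℝ) (u : ℝ → X → E) : ℝ :=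
  (∫ t in I, (∫ x in Ω, ‖u t x‖ ^ q) ^ (r / q)) ^ (1 / r)

/-- Test fields for very weak solutions: divergence-free C^{2,1} fields compactly
supported in Q₊(R) ∪ Σ_R satisfying the Navier boundary condition (3.3). -/
structure IsTestVW (R α : ℝ) (Φ : ℝ → V3 → V3) : Prop where
  smooth : ContDiff ℝ 2 (fun p : ℝ × V3 => Φ p.1 p.2)
  supp : tsupport (fun p : ℝ × V3 => Φ p.1 p.2) ⊆ (TI R) ×ˢ (Cplus R ∪ Gam R)
  divfree : ∀ t x, vdiv (Φ t) x = 0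
  bc12 : ∀ (t : ℝ) (x : V3), x 2 = 0 → ∀ k : Fin 3, k ≠ 2 →
    pd 2 (fun y => Φ t y k) x - α * Φ t x k = 0
  bc3 : ∀ (t : ℝ) (x : V3), x 2 = 0 → Φ t x 2 = 0

/-- Test fields for weak solutions: divergence-free C¹ fields compactly supported
in Q₊(R) ∪ Σ_R with vanishing normal component on the flat boundary. -/
structure IsTestW (R : ℝ) (Φ : ℝ → V3 → V3) : Prop where
  smooth : ContDiff ℝ 1 (fun p : ℝ × V3 => Φ p.1 p.2)
  supp : tsupport (fun p : ℝ × V3 => Φ p.1 p.2) ⊆ (TI R) ×ˢ (Cplus R ∪ Gam R)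
  divfree : ∀ t x, vdiv (Φ t) x = 0
  bc3 : ∀ (t : ℝ) (x : V3), x 2 = 0 → Φ t x 2 = 0

/-- Test fields for weak solution pairs: C¹ fields compactly supported
in Q₊(R) ∪ Σ_R with vanishing normal component on the flat boundary
(not necessarily divergence free). -/
structure IsTestP (R : ℝ) (Φ : ℝ → V3 → V3) : Prop where
  smooth : ContDiff ℝ 1 (fun p : ℝ × V3 => Φ p.1 p.2)
  supp : tsupport (fun p : ℝ × V3 => Φ p.1 p.2) ⊆ (TI R) ×ˢ (Cplus R ∪ Gam R)
  bc3 : ∀ (t : ℝ) (x : V3), x 2 = 0 → Φ t x 2 = 0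

/-- Smooth scalar test functions compactly supported in the interior of Q₊(R). -/
def IsIntTest (R : ℝ) (χ : ℝ → V3 → ℝ) : Prop :=
  ContDiff ℝ (⊤ : ℕ∞) (fun p : ℝ × V3 => χ p.1 p.2) ∧
  tsupport (fun p : ℝ × V3 => χ p.1 p.2) ⊆ (TI R) ×ˢ (Cplus R)

/-- `du` is the (spatial) weak gradient of `u` in Q₊(R): (du)_{ij} = ∂_j u_i. -/
def IsWeakGrad (R : ℝ) (u : ℝ → V3 → V3) (du : ℝ → V3 → Fin 3 → Fin 3 → ℝ) : Prop :=
  ∀ χ, IsIntTest R χ → ∀ i j : Fin 3,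
    (∫ t in TI R, ∫ x in Cplus R, du t x i j * χ t x) =
      -(∫ t in TI R, ∫ x in Cplus R, u t x i * pd j (χ t) x)

/-- `u(·,t)` is divergence free in C₊(R) with vanishing normal trace on the flat
boundary, expressed via (2.10): ∫ u·∇Ψ = 0 for all Ψ ∈ C¹_c(C₊(R) ∪ Γ_R). -/
def NormalBC (R : ℝ) (u : ℝ → V3 → V3) : Prop :=
  ∀ᵐ t ∂(volume.restrict (TI R)), ∀ Ψ : V3 → ℝ, ContDiff ℝ 1 Ψ →
    tsupport Ψ ⊆ Cplus R ∪ Gam R →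
    (∫ x in Cplus R, ∑ j, u t x j * pd j Ψ x) = 0

/-- Very weak solution of the Stokes system in Q₊(R) with Navier boundary
condition with friction coefficient α on the flat boundary (Definition 2.4). -/
structure IsVeryWeakSol (R α : ℝ) (u f : ℝ → V3 → V3)
    (F : ℝ → V3 → Fin 3 → Fin 3 → ℝ) : Prop where
  intu : IntegrableOn (fun p : ℝ × V3 => u p.1 p.2) ((TI R) ×ˢ (Cplus R))
  intf : IntegrableOn (fun p : ℝ × V3 => f p.1 p.2) ((TI R) ×ˢ (Cplus R))
  intF : IntegrableOn (fun p : ℝ × V3 => F p.1 p.2) ((TI R) ×ˢ (Cplus R))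
  normal : NormalBC R u
  eq : ∀ Φ, IsTestVW R α Φ →
    -(∫ t in TI R, ∫ x in Cplus R,
        ∑ i, u t x i * (deriv (fun s => Φ s x i) t + lap (fun y => Φ t y i) x)) =
      ∫ t in TI R, ∫ x in Cplus R,
        ((∑ i, f t x i * Φ t x i) - ∑ i, ∑ j, F t x i j * pd j (fun y => Φ t y i) x)

/-- Weak solution of the Stokes system in Q₊(R) with Navier boundary condition
with friction coefficient α on the flat boundary (Definition 2.5); `du` is the
weak spatial gradient of `u`.  The boundary term α ∬_Σ u_k Φ_k is expressed,
via the Gauss–Green formula ∬_Σ u_k Φ_k = -∬_{Q₊} ∂₃(u_k Φ_k), in terms of the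
weak gradient, which avoids invoking a trace operator. -/
structure IsWeakSol (R α : ℝ) (u : ℝ → V3 → V3) (du : ℝ → V3 → Fin 3 → Fin 3 → ℝ)
    (f : ℝ → V3 → V3) (F : ℝ → V3 → Fin 3 → Fin 3 → ℝ) : Prop where
  intu : IntegrableOn (fun p : ℝ × V3 => u p.1 p.2) ((TI R) ×ˢ (Cplus R))
  intdu : IntegrableOn (fun p : ℝ × V3 => du p.1 p.2) ((TI R) ×ˢ (Cplus R))
  intf : IntegrableOn (fun p : ℝ × V3 => f p.1 p.2) ((TI R) ×ˢ (Cplus R))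
  intF : IntegrableOn (fun p : ℝ × V3 => F p.1 p.2) ((TI R) ×ˢ (Cplus R))
  grad : IsWeakGrad R u du
  normal : NormalBC R u
  eq : ∀ Φ, IsTestW R Φ →
    ((∫ t in TI R, ∫ x in Cplus R,
        (-(∑ i, u t x i * deriv (fun s => Φ s x i) t)
          + ∑ i, ∑ j, du t x i j * pd j (fun y => Φ t y i) x))
      - α * ∑ k : Fin 2, ∫ t in TI R, ∫ x in Cplus R,
          (du t x (Fin.castSucc k) 2 * Φ t x (Fin.castSucc k)
            + u t x (Fin.castSucc k) * pd 2 (fun y => Φ t y (Fin.castSucc k)) x))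
    = ∫ t in TI R, ∫ x in Cplus R,
        ((∑ i, f t x i * Φ t x i) - ∑ i, ∑ j, F t x i j * pd j (fun y => Φ t y i) x)

/-- Weak solution pair (u, pr) of the Stokes system in Q₊(R) with Navier
boundary condition with friction coefficient α on the flat boundary
(Definition 2.6); `du` is the weak spatial gradient of `u`, and the boundary
term is expressed as in `IsWeakSol`. -/
structure IsWeakSolPair (R α : ℝ) (u : ℝ → V3 → V3) (du : ℝ → V3 → Fin 3 → Fin 3 → ℝ)
    (pr : ℝ → V3 → ℝ) (f : ℝ → V3 → V3) (F : ℝ → V3 → Fin 3 → Fin 3 → ℝ) : Prop where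
  intu : IntegrableOn (fun p : ℝ × V3 => u p.1 p.2) ((TI R) ×ˢ (Cplus R))
  intdu : IntegrableOn (fun p : ℝ × V3 => du p.1 p.2) ((TI R) ×ˢ (Cplus R))
  intpr : IntegrableOn (fun p : ℝ × V3 => pr p.1 p.2) ((TI R) ×ˢ (Cplus R))
  intf : IntegrableOn (fun p : ℝ × V3 => f p.1 p.2) ((TI R) ×ˢ (Cplus R))
  intF : IntegrableOn (fun p : ℝ × V3 => F p.1 p.2) ((TI R) ×ˢ (Cplus R))
  grad : IsWeakGrad R u du
  normal : NormalBC R u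
  eq : ∀ Φ, IsTestP R Φ →
    ((∫ t in TI R, ∫ x in Cplus R,
        (-(∑ i, u t x i * deriv (fun s => Φ s x i) t)
          + (∑ i, ∑ j, du t x i j * pd j (fun y => Φ t y i) x)
          - pr t x * vdiv (Φ t) x))
      - α * ∑ k : Fin 2, ∫ t in TI R, ∫ x in Cplus R,
          (du t x (Fin.castSucc k) 2 * Φ t x (Fin.castSucc k)
            + u t x (Fin.castSucc k) * pd 2 (fun y => Φ t y (Fin.castSucc k)) x))
    = ∫ t in TI R, ∫ x in Cplus R,
        ((∑ i, f t x i * Φ t x i) - ∑ i, ∑ j, F t x i j * pd j (fun y => Φ t y i) x)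

/-- A mollifier: smooth, radial, supported in the unit ball, with integral 1. -/
def IsMollifier (η : V3 → ℝ) : Prop :=
  ContDiff ℝ (⊤ : ℕ∞) η ∧ tsupport η ⊆ Metric.closedBall 0 1 ∧
  (∀ x y : V3, ‖x‖ = ‖y‖ → η x = η y) ∧ (∫ x : V3, η x) = 1

/-- Rescaled mollifier η_ε(x) = ε⁻³ η(x/ε). -/
def mol (η : V3 → ℝ) (ε : ℝ) (x : V3) : ℝ := (ε ^ 3)⁻¹ * η (ε⁻¹ • x)

/-- Kernel η_ε⁺(x,y) = η_ε(x-y) + η_ε(x-y*). -/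
def molP (η : V3 → ℝ) (ε : ℝ) (x y : V3) : ℝ := mol η ε (x - y) + mol η ε (x - refl3 y)

/-- Kernel η_ε⁻(x,y) = η_ε(x-y) - η_ε(x-y*). -/
def molM (η : V3 → ℝ) (ε : ℝ) (x y : V3) : ℝ := mol η ε (x - y) - mol η ε (x - refl3 y)

/-- The mollified even extension E⁺(g). -/
def Ep (η : V3 → ℝ) (ε : ℝ) (g : V3 → ℝ) (x : V3) : ℝ := ∫ y in Hplus, g y * molP η ε x y

/-- The mollified odd extension E⁻(g). -/
def Em (η : V3 → ℝ) (ε : ℝ) (g : V3 → ℝ) (x : V3) : ℝ := ∫ y in Hplus, g y * molM η ε x y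

/-- The operator I_α of (2.13). -/
def Ialpha (η : V3 → ℝ) (ε α : ℝ) (g : V3 → ℝ) (x : V3) : ℝ :=
  ∫ ξ in Ioi (0:ℝ), Real.exp (-(α * ξ)) *
    ∫ y in Hplus, g y * mol η ε (mk3 (x 0 - y 0) (x 1 - y 1) (x 2 + y 2 + ξ))

/-- The heat kernel Γ(x,t) = (4πt)^{-3/2} exp(-|x|²/(4t)) on ℝ³. -/
def heatK (x : V3) (t : ℝ) : ℝ :=
  (4 * Real.pi * t) ^ (-(3:ℝ)/2) * Real.exp (-‖x‖^2 / (4*t))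

/-- The even-even-odd extension of a (time-dependent) vector field on the
half space to all of ℝ³. -/
def extV (u : ℝ → V3 → V3) : ℝ → V3 → V3 :=
  fun t x => if 0 ≤ x 2 then u t x
    else mk3 (u t (refl3 x) 0) (u t (refl3 x) 1) (-(u t (refl3 x) 2))

/-- The corresponding extension of a (time-dependent) matrix field,
with signs ε_i ε_j. -/
def extM (F : ℝ → V3 → Fin 3 → Fin 3 → ℝ) : ℝ → V3 → Fin 3 → Fin 3 → ℝ :=
  fun t x i j => if 0 ≤ x 2 then F t x i j else sgn3 i * sgn3 j * F t (refl3 x) i j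

/-- The extension of a (time-dependent) scalar field, even in x₃. -/
def extS (pr : ℝ → V3 → ℝ) : ℝ → V3 → ℝ :=
  fun t x => if 0 ≤ x 2 then pr t x else pr t (refl3 x)

/-! ### Coordinates, reflection and the cut-off mollification -/

/-- The mollification of `g` cut off to the half space, i.e. `(1_{ℝ³₊} g) * η_ε`, on all of ℝ³. -/
def cutMol (η : V3 → ℝ) (ε : ℝ) (g : V3 → ℝ) (x : V3) : ℝ :=
  ∫ y in Hplus, g y * mol η ε (x - y)

@[simp] lemma mk3_zero (a b c : ℝ) : mk3 a b c 0 = a := rfl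
@[simp] lemma mk3_one (a b c : ℝ) : mk3 a b c 1 = b := rfl
@[simp] lemma mk3_two (a b c : ℝ) : mk3 a b c 2 = c := rfl

lemma ext3 {x y : V3} (h0 : x 0 = y 0) (h1 : x 1 = y 1) (h2 : x 2 = y 2) : x = y := by
  ext i; fin_cases i <;> assumption

lemma norm_refl3 (x : V3) : ‖refl3 x‖ = ‖x‖ := by
  simp [EuclideanSpace.norm_eq, Fin.sum_univ_three, refl3]

lemma contDiff_mk3 {E : Type*} [NormedAddCommGroup E] [NormedSpace ℝ E] {n : WithTop ℕ∞}
    {a b c : E → ℝ} (ha : ContDiff ℝ n a) (hb : ContDiff ℝ n b) (hc : ContDiff ℝ n c) :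
    ContDiff ℝ n (fun x => mk3 (a x) (b x) (c x)) := by
  rw [contDiff_euclidean]
  intro i
  fin_cases i <;> assumption

lemma contDiff_coord {n : WithTop ℕ∞} (i : Fin 3) : ContDiff ℝ n (fun x : V3 => x i) :=
  contDiff_euclidean.1 contDiff_id i

lemma contDiff_refl3 {n : WithTop ℕ∞} : ContDiff ℝ n refl3 :=
  contDiff_mk3 (contDiff_coord 0) (contDiff_coord 1) (contDiff_coord 2).neg

lemma mol_refl3 {η : V3 → ℝ} (hη : IsMollifier η) (ε : ℝ) (x : V3) :
    mol η ε (refl3 x) = mol η ε x := by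
  unfold mol
  rw [hη.2.2.1 (ε⁻¹ • refl3 x) (ε⁻¹ • x) (by rw [norm_smul, norm_smul, norm_refl3])]

lemma contDiff_mol {η : V3 → ℝ} (hη : IsMollifier η) (ε : ℝ) :
    ContDiff ℝ 1 (mol η ε) :=
  contDiff_const.mul ((hη.1.of_le (by exact_mod_cast le_top)).comp (contDiff_const_smul _))

lemma hasCompactSupport_mol {η : V3 → ℝ} (hη : IsMollifier η) {ε : ℝ} (hε : 0 < ε) :
    HasCompactSupport (mol η ε) := by
  have h : HasCompactSupport η :=
    (isCompact_closedBall (0 : V3) 1).of_isClosed_subset (isClosed_tsupport _) hη.2.1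
  exact (h.comp_smul (inv_ne_zero hε.ne')).mul_left

lemma measurableSet_Hplus : MeasurableSet Hplus :=
  (isOpen_lt continuous_const (contDiff_coord (n := 0) 2).continuous).measurableSet

lemma cutMol_eq_convolution (η : V3 → ℝ) (ε : ℝ) (g : V3 → ℝ) :
    cutMol η ε g =
      convolution (Hplus.indicator g) (mol η ε) (ContinuousLinearMap.mul ℝ ℝ) volume := by
  funext x
  rw [convolution_mul, cutMol, ← integral_indicator measurableSet_Hplus]
  congr 1
  funext y
  by_cases hy : y ∈ Hplus <;> simp [hy]

lemma contDiff_cutMol {η : V3 → ℝ} (hη : IsMollifier η) {ε : ℝ} (hε : 0 < ε)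
    {g : V3 → ℝ} (hc : Continuous g) (hcs : HasCompactSupport g) :
    ContDiff ℝ 1 (cutMol η ε g) := by
  rw [cutMol_eq_convolution]
  exact (hasCompactSupport_mol hη hε).contDiff_convolution_right (n := 1) _
    ((hc.integrable_of_hasCompactSupport hcs).indicator measurableSet_Hplus).locallyIntegrable
    (contDiff_mol hη ε)

lemma hasCompactSupport_cutMol {η : V3 → ℝ} (hη : IsMollifier η) {ε : ℝ} (hε : 0 < ε)
    {g : V3 → ℝ} (hcs : HasCompactSupport g) :
    HasCompactSupport (cutMol η ε g) := by
  rw [cutMol_eq_convolution]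
  refine HasCompactSupport.convolution _ ?_ (hasCompactSupport_mol hη hε)
  exact hcs.mono (by rw [Set.support_indicator]; exact inter_subset_right)

/-! ### `E⁺` and `I_α` in terms of the cut-off mollification -/

/-- By radiality of `η`, the reflected kernel integrates to the reflection of `cutMol`. -/
lemma setIntegral_mol_reflected {η : V3 → ℝ} (hη : IsMollifier η) (ε : ℝ) (g : V3 → ℝ) (a b c : ℝ) :
    ∫ y in Hplus, g y * mol η ε (mk3 (a - y 0) (b - y 1) (c + y 2)) =
      cutMol η ε g (mk3 a b (-c)) := by
  unfold cutMol
  congr 1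
  funext y
  rw [← mol_refl3 hη ε (mk3 a b (-c) - y)]
  congr 2
  apply ext3 <;> simp [refl3, add_comm]

/-- `E⁺(g)` is the sum of `cutMol` and of its reflection. -/
lemma Ep_eq {η : V3 → ℝ} (hη : IsMollifier η) (ε : ℝ)
    {g : V3 → ℝ} (hc : Continuous g) (hcs : HasCompactSupport g) (x : V3) :
    Ep η ε g x = cutMol η ε g x + cutMol η ε g (refl3 x) := by
  have hint : ∀ k : V3 → V3, Continuous k →
      IntegrableOn (fun y => g y * mol η ε (k y)) Hplus := fun k hk =>
    ((hc.mul ((contDiff_mol hη ε).continuous.comp hk)).integrable_of_hasCompactSupport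
      hcs.mul_right).integrableOn
  have hr : Continuous refl3 := (contDiff_refl3 (n := 0)).continuous
  have h2 : ∫ y in Hplus, g y * mol η ε (x - refl3 y) = cutMol η ε g (refl3 x) := by
    rw [refl3, ← setIntegral_mol_reflected hη ε g (x 0) (x 1) (x 2)]
    congr 1
    funext y
    congr 2
    apply ext3 <;> simp [refl3]
  rw [Ep]
  simp only [molP, mul_add]
  rw [integral_add (hint (fun y => x - y) (continuous_const.sub continuous_id))
    (hint (fun y => x - refl3 y) (continuous_const.sub hr)), h2]
  rfl

lemma Ialpha_eq {η : V3 → ℝ} (hη : IsMollifier η) (ε α : ℝ) (g : V3 → ℝ) (x : V3) :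
    Ialpha η ε α g x =
      ∫ ξ in Ioi (0:ℝ), Real.exp (-(α * ξ)) * cutMol η ε g (mk3 (x 0) (x 1) (-(x 2 + ξ))) := by
  unfold Ialpha
  congr 1
  funext ξ
  rw [← setIntegral_mol_reflected hη ε g (x 0) (x 1) (x 2 + ξ)]
  congr 2
  funext y
  congr 3
  ring

/-! ### Regularity of `I_α(g)` -/

/-- On each vertical line, `cutMol` is supported in a common compact interval. -/
lemma exists_cutMol_vertical_bound {η : V3 → ℝ} (hη : IsMollifier η) {ε : ℝ} (hε : 0 < ε)
    {g : V3 → ℝ} (hcs : HasCompactSupport g) :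
    ∃ R : ℝ, ∀ a b t : ℝ, t ∉ Icc (-R) R → cutMol η ε g (mk3 a b t) = 0 := by
  obtain ⟨R, hR⟩ := (hasCompactSupport_cutMol hη hε hcs).isBounded.subset_closedBall 0
  refine ⟨R, fun a b t ht => ?_⟩
  by_contra h
  apply ht
  have h1 : ‖mk3 a b t‖ ≤ R := by
    simpa using hR (subset_tsupport _ h)
  have h2 : |t| ≤ ‖mk3 a b t‖ := by
    simpa using PiLp.norm_apply_le (mk3 a b t) 2
  exact abs_le.1 (h2.trans h1)

/-- `I_α(g)` is a one-dimensional convolution in `x₃`, with `x'` as a parameter, of the locally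
integrable weight `1_{ξ>0} e^{-αξ}` with the `C¹` function `cutMol`. -/
lemma contDiff_Ialpha {η : V3 → ℝ} (hη : IsMollifier η) {ε : ℝ} (hε : 0 < ε) (α : ℝ)
    {g : V3 → ℝ} (hc : Continuous g) (hcs : HasCompactSupport g) :
    ContDiff ℝ 1 (Ialpha η ε α g) := by
  obtain ⟨R, hR⟩ := exists_cutMol_vertical_bound hη hε hcs
  have hw : LocallyIntegrable ((Ioi (0:ℝ)).indicator (fun ξ => Real.exp (-(α * ξ)))) volume :=
    (Continuous.locallyIntegrable (by fun_prop)).indicator measurableSet_Ioi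
  have hk : ContDiff ℝ 1 (fun q : V3 × ℝ => cutMol η ε g (mk3 (q.1 0) (q.1 1) q.2)) :=
    (contDiff_cutMol hη hε hc hcs).comp
      (contDiff_mk3 ((contDiff_coord 0).comp contDiff_fst) ((contDiff_coord 1).comp contDiff_fst)
        contDiff_snd)
  have key := contDiffOn_convolution_right_with_param_comp (μ := (volume : Measure ℝ)) (n := 1)
    (ContinuousLinearMap.mul ℝ ℝ) (s := (univ : Set V3)) (v := fun x : V3 => -(x 2))
    (contDiff_coord 2).neg.contDiffOn (g := fun (p : V3) t => cutMol η ε g (mk3 (p 0) (p 1) t))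
    isOpen_univ (isCompact_Icc (a := -R) (b := R)) (fun p t _ ht => hR _ _ t ht) hw hk.contDiffOn
  rw [← contDiffOn_univ]
  refine key.congr fun x _ => ?_
  rw [Ialpha_eq hη, convolution_mul, ← integral_indicator measurableSet_Ioi]
  congr 1
  funext ξ
  by_cases hξ : ξ ∈ Ioi (0:ℝ)
  · simp only [indicator_of_mem hξ]
    congr 3
    ring
  · simp only [indicator_of_notMem hξ, zero_mul]

/-! ### Normal derivatives -/

lemma setIntegral_Ioi_comp_add_right (f : ℝ → ℝ) (t : ℝ) :
    ∫ ξ in Ioi (0:ℝ), f (ξ + t) = ∫ s in Ioi t, f s := by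
  have h := (measurePreserving_add_right volume t).setIntegral_preimage_emb
    (measurableEmbedding_addRight t) f (Ioi t)
  rwa [Set.preimage_add_const_Ioi, sub_self] at h

/-- The weighted tail integral `J(t) = ∫₀^∞ e^{-αξ} φ(t + ξ) dξ` satisfies `J'(0) = αJ(0) - φ(0)`. -/
lemma hasDerivAt_tail {φ : ℝ → ℝ} (hφ : Continuous φ) (hs : HasCompactSupport φ) (α : ℝ) :
    HasDerivAt (fun t => ∫ ξ in Ioi (0:ℝ), Real.exp (-(α * ξ)) * φ (t + ξ))
      (α * (∫ ξ in Ioi (0:ℝ), Real.exp (-(α * ξ)) * φ ξ) - φ 0) 0 := by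
  set f : ℝ → ℝ := fun s => Real.exp (-(α * s)) * φ s with hf
  have hfc : Continuous f := by fun_prop
  have hfi : Integrable f := hfc.integrable_of_hasCompactSupport hs.mul_left
  -- Substituting `s = t + ξ` moves the dependence on `t` into the domain of integration.
  have heq : (fun t => ∫ ξ in Ioi (0:ℝ), Real.exp (-(α * ξ)) * φ (t + ξ)) =
      fun t => Real.exp (α * t) * ((∫ s in Ioi (0:ℝ), f s) - ∫ s in (0:ℝ)..t, f s) := by
    funext t
    have h1 := intervalIntegral.integral_interval_add_Ioi (a := 0) (b := t)
      hfi.integrableOn hfi.integrableOn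
    rw [← h1, add_sub_cancel_left, ← setIntegral_Ioi_comp_add_right f t, ← integral_const_mul]
    congr 1
    funext ξ
    rw [hf]
    simp only
    rw [← mul_assoc, ← Real.exp_add, add_comm t ξ]
    congr 2
    ring
  rw [heq]
  have h2 : HasDerivAt (fun t => ∫ s in (0:ℝ)..t, f s) (f 0) 0 :=
    intervalIntegral.integral_hasDerivAt_right (hfc.intervalIntegrable _ _)
      hfc.stronglyMeasurable.stronglyMeasurableAtFilter hfc.continuousAt
  have h3 : HasDerivAt (fun t : ℝ => Real.exp (α * t)) α 0 := by
    simpa using ((hasDerivAt_id (0:ℝ)).const_mul α).exp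
  have h4 := h3.mul (h2.const_sub (∫ s in Ioi (0:ℝ), f s))
  refine h4.congr_deriv ?_
  simp [hf, sub_eq_add_neg]

lemma pd_eq_of_hasDerivAt {f : V3 → ℝ} {x : V3} (hf : DifferentiableAt ℝ f x) {j : Fin 3} {d : ℝ}
    (h : HasDerivAt (fun t : ℝ => f (x + t • e3 j)) d 0) : pd j f x = d := by
  have h1 : HasLineDerivAt ℝ f (fderiv ℝ f x (e3 j)) x (e3 j) :=
    hf.hasFDerivAt.hasLineDerivAt (e3 j)
  exact HasDerivAt.unique h1 h

lemma add_smul_e3 (x : V3) (t : ℝ) : x + t • e3 2 = mk3 (x 0) (x 1) (x 2 + t) := by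
  apply ext3 <;> simp [e3]

/-- The identity `∂₃ I_α(g)(x) = α I_α(g)(x) - ((1_{ℝ³₊} g) * η_ε)(x*)`. -/
lemma pd_Ialpha {η : V3 → ℝ} (hη : IsMollifier η) {ε : ℝ} (hε : 0 < ε) (α : ℝ)
    {g : V3 → ℝ} (hc : Continuous g) (hcs : HasCompactSupport g) (x : V3) :
    pd 2 (Ialpha η ε α g) x = α * Ialpha η ε α g x - cutMol η ε g (refl3 x) := by
  apply pd_eq_of_hasDerivAt
    ((contDiff_Ialpha hη hε α hc hcs).differentiable one_ne_zero).differentiableAt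
  set φ : ℝ → ℝ := fun t => cutMol η ε g (mk3 (x 0) (x 1) (-(x 2 + t))) with hφ
  have hφc : Continuous φ := ((contDiff_cutMol hη hε hc hcs).comp
    (contDiff_mk3 contDiff_const contDiff_const (contDiff_const.add contDiff_id).neg)).continuous
  have hφs : HasCompactSupport φ := by
    obtain ⟨R, hR⟩ := exists_cutMol_vertical_bound hη hε hcs
    refine HasCompactSupport.intro (isCompact_Icc (a := -R - x 2) (b := R - x 2)) fun t ht => ?_
    apply hR
    intro h
    exact ht ⟨by linarith [h.2], by linarith [h.1]⟩
  have h := hasDerivAt_tail hφc hφs α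
  have h0 : φ 0 = cutMol η ε g (refl3 x) := by simp [hφ, refl3]
  rw [h0] at h
  convert h using 1
  · funext t
    rw [add_smul_e3, Ialpha_eq hη]
    simp only [hφ, mk3_zero, mk3_one, mk3_two, add_assoc]
  · rw [Ialpha_eq hη]

/-- `E⁺(g)` is even in `x₃`, so its normal derivative vanishes on the boundary. -/
lemma pd_Ep {η : V3 → ℝ} (hη : IsMollifier η) {ε : ℝ} (hε : 0 < ε)
    {g : V3 → ℝ} (hc : Continuous g) (hcs : HasCompactSupport g) {x : V3} (hx : x 2 = 0)
    (hd : DifferentiableAt ℝ (Ep η ε g) x) :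
    pd 2 (Ep η ε g) x = 0 := by
  apply pd_eq_of_hasDerivAt hd
  have hG : DifferentiableAt ℝ (cutMol η ε g) x :=
    ((contDiff_cutMol hη hε hc hcs).differentiable one_ne_zero).differentiableAt
  have h1 := hG.hasFDerivAt.hasLineDerivAt (e3 2)
  have h2 := hG.hasFDerivAt.hasLineDerivAt (-e3 2)
  have h3 := HasDerivAt.add h1 h2
  rw [map_neg, add_neg_cancel] at h3
  refine h3.congr_of_eventuallyEq (Eventually.of_forall fun t => ?_)
  simp only [Pi.add_apply]
  rw [Ep_eq hη ε hc hcs]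
  congr 2
  apply ext3 <;> simp [refl3, e3, hx]

/-- **The Robin boundary condition (2.14).**  For α ≥ 0, 0 < ε < 1/100 and g
continuous with compact support in the closed half space, the function
g^ε = E⁺(g) - 2α I_α(g) is C¹ up to the boundary and satisfies
(∂₃ - α) g^ε = 0 on {x₃ = 0}. -/
theorem Robin_boundary_condition
    (η : V3 → ℝ) (hη : IsMollifier η)
    (α ε : ℝ) (hα : 0 ≤ α) (hε : ε ∈ Ioo (0:ℝ) (1/100))
    (g : V3 → ℝ) (hc : Continuous g) (hcs : HasCompactSupport g) :
    ContDiffOn ℝ 1 (fun x => Ep η ε g x - 2 * α * Ialpha η ε α g x)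
      {x : V3 | 0 ≤ x 2} ∧
    ∀ x : V3, x 2 = 0 →
      pd 2 (fun y => Ep η ε g y - 2 * α * Ialpha η ε α g y) x
        - α * (Ep η ε g x - 2 * α * Ialpha η ε α g x) = 0 := by
  have hε0 : 0 < ε := hε.1
  have hE : ContDiff ℝ 1 (Ep η ε g) := by
    rw [funext (Ep_eq hη ε hc hcs)]
    exact (contDiff_cutMol hη hε0 hc hcs).add
      ((contDiff_cutMol hη hε0 hc hcs).comp contDiff_refl3)
  have hI : ContDiff ℝ 1 (Ialpha η ε α g) := contDiff_Ialpha hη hε0 α hc hcs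
  refine ⟨(hE.sub (contDiff_const.mul hI)).contDiffOn, fun x hx => ?_⟩
  have hEd : DifferentiableAt ℝ (Ep η ε g) x := (hE.differentiable one_ne_zero).differentiableAt
  have hId : DifferentiableAt ℝ (Ialpha η ε α g) x :=
    (hI.differentiable one_ne_zero).differentiableAt
  have hpd : pd 2 (fun y => Ep η ε g y - 2 * α * Ialpha η ε α g y) x =
      pd 2 (Ep η ε g) x - 2 * α * pd 2 (Ialpha η ε α g) x := by
    have h := hEd.hasFDerivAt.sub (hId.hasFDerivAt.const_mul (2 * α))
    have h' := h.fderiv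
    simp only [pd]
    erw [h']
    simp
  have hrx : refl3 x = x := by apply ext3 <;> simp [refl3, hx]
  rw [hpd, pd_Ep hη hε0 hc hcs hx hEd, pd_Ialpha hη hε0 α hc hcs, Ep_eq hη ε hc hcs, hrx]
  ring

end
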